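/- For all u ∈ ℍ and all t ≥ 1, with probability at least 1 − e^{−t}, |⟨L_r(E)θ_r, u⟩| ≤ C σ_r(Σ; u)(√(t/n) ∨ t/n) for an absolute constant C > 0. Moreover, if σ_r(Σ; u) > 0, then sup_{x ∈ ℝ} |ℙ{√n ⟨L_r(E)θ_r, u⟩ / σ_r(Σ; u) ≤ x} − Φ(x)| ≤ C' n^{−1/2} for an absolute constant C' > 0. -/

import Mathlib

open MeasureTheory ProbabilityTheory Filter Set
open scoped RealInnerProductSpace Topology NNReal ENNReal

noncomputable section

namespace KLN

variable {H : Type*} [NormedAddCommGroup H] [InnerProductSpace ℝ H] [CompleteSpace H]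

/-- Rank-one operator `x ⊗ y : w ↦ ⟪y, w⟫ • x`. -/
def outer (x y : H) : H →L[ℝ] H := (innerSL ℝ y).smulRight x

/-- Sample covariance of the sample `X`. -/
def sampleCov {n : ℕ} (X : Fin n → H) : H →L[ℝ] H :=
  (n : ℝ)⁻¹ • ∑ j : Fin n, outer (X j) (X j)

/-- Courant–Fischer: `lam A j` is the `(j+1)`-th largest eigenvalue of the
positive self-adjoint compact operator `A` (eigenvalues repeated with multiplicity). -/
def lam (A : H →L[ℝ] H) (j : ℕ) : ℝ :=
  ⨆ V : {V : Submodule ℝ H // Module.finrank ℝ V = j + 1},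
    ⨅ x : {x : H // x ∈ V.1 ∧ ‖x‖ = 1}, ⟪A x.1, x.1⟫

/-- `λ_δ(A) := max {λ ∈ A : (λ-δ, λ) ∩ A = ∅}`. -/
def lamDelta (δ : ℝ) (A : Set ℝ) : ℝ := sSup {l | l ∈ A ∧ Ioo (l - δ) l ∩ A = ∅}

/-- Top δ-cluster `T_δ(A) := A \ [0, λ_δ(A))`. -/
def topCluster (δ : ℝ) (A : Set ℝ) : Set ℝ := A \ Ico 0 (lamDelta δ A)

/-- Successive residual sets after removing top clusters. -/
def resid (δ : ℝ) (A : Set ℝ) : ℕ → Set ℝ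
  | 0 => A
  | k + 1 => resid δ A k \ topCluster δ (resid δ A k)

/-- `cluster δ A k` is the `(k+1)`-th δ-cluster `A_{k+1}` of `A`. -/
def cluster (δ : ℝ) (A : Set ℝ) (k : ℕ) : Set ℝ := topCluster δ (resid δ A k)

/-- The number of δ-clusters: `ν := min {j : A_{j+1} = ∅}`. -/
def nClusters (δ : ℝ) (A : Set ℝ) : ℕ := sInf {j | cluster δ A j = ∅}

/-- `σ(A) ∪ {0}`. -/
def spec0 (A : H →L[ℝ] H) : Set ℝ := spectrum ℝ A ∪ {0}

/-- Direct sum of the eigenspaces of `A` for eigenvalues in `c`. -/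
def clusterSpace (A : H →L[ℝ] H) (c : Set ℝ) : Submodule ℝ H :=
  ⨆ t ∈ c, Module.End.eigenspace (A : H →ₗ[ℝ] H) t

/-- `A` is self-adjoint, positive and nuclear (trace class). -/
def IsPosNuclear (A : H →L[ℝ] H) : Prop :=
  (∀ x y : H, ⟪A x, y⟫ = ⟪x, A y⟫) ∧ (∀ x : H, 0 ≤ ⟪A x, x⟫) ∧
    ∃ (ι : Type) (e : HilbertBasis ι ℝ H), Summable fun i => ⟪A (e i), e i⟫

/-- Nuclear norm of a self-adjoint `A`: `‖A‖₁ = ∑_j √(λ_j(A∘A))`. -/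
def nuclearNormSA (A : H →L[ℝ] H) : ℝ := ∑' j, Real.sqrt (lam (A.comp A) j)

/-- A covariance operator together with its spectral decomposition
`Σ = ∑_s μ_s P_s` where `μ 0 > μ 1 > ⋯ > 0` are the distinct eigenvalues (0-indexed;
zero projections `P s = 0` are allowed so that finite rank operators are covered)
and `P s` are the (finite rank, mutually orthogonal) spectral projections. -/
structure CovOp (H : Type*) [NormedAddCommGroup H] [InnerProductSpace ℝ H]
    [CompleteSpace H] where
  toCLM : H →L[ℝ] H
  μ : ℕ → ℝ
  P : ℕ → H →L[ℝ] H
  μ_pos : ∀ s, 0 < μ s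
  μ_anti : StrictAnti μ
  μ_lim : Tendsto μ atTop (nhds 0)
  P_symm : ∀ s (x y : H), ⟪P s x, y⟫ = ⟪x, P s y⟫
  P_idem : ∀ s (x : H), P s (P s x) = P s x
  P_orth : ∀ s t, s ≠ t → ∀ x : H, P s (P t x) = 0
  P_finrank : ∀ s, FiniteDimensional ℝ (LinearMap.range (P s).toLinearMap)
  μm_summable : Summable fun s =>
    μ s * (Module.finrank ℝ (LinearMap.range (P s).toLinearMap) : ℝ)
  decomp : ∀ x : H, HasSum (fun s => μ s • P s x) (toCLM x)

namespace CovOp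

/-- multiplicity `m_s` of `μ s`. -/
def m (S : CovOp H) (s : ℕ) : ℕ :=
  Module.finrank ℝ (LinearMap.range (S.P s).toLinearMap)

/-- `tr(Σ) = ∑_s μ_s m_s`. -/
def trace (S : CovOp H) : ℝ := ∑' s, S.μ s * (S.m s : ℝ)

/-- effective rank `r(Σ) = tr(Σ)/‖Σ‖`. -/
def effRank (S : CovOp H) : ℝ := S.trace / ‖S.toCLM‖

/-- spectral gap `g_r = dist(μ_r, σ(Σ) \ {μ_r})`. -/
def g (S : CovOp H) (r : ℕ) : ℝ :=
  Metric.infDist (S.μ r) (spectrum ℝ S.toCLM \ {S.μ r})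

/-- `ḡ_r = min_{s ≤ r} g_s`. -/
def gbar (S : CovOp H) (r : ℕ) : ℝ := ⨅ s : Fin (r + 1), S.g s

/-- `C_r x = ∑_{s ≠ r} (μ_r - μ_s)⁻¹ P_s x`. -/
def C (S : CovOp H) (r : ℕ) (x : H) : H :=
  ∑' s, (if s = r then 0 else (S.μ r - S.μ s)⁻¹) • S.P s x

/-- `σ_r²(Σ; u) = μ_r ⟨Σ C_r u, C_r u⟩`. -/
def sigmaSq (S : CovOp H) (r : ℕ) (u : H) : ℝ :=
  S.μ r * ⟪S.toCLM (S.C r u), S.C r u⟫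

/-- `Δ_r = {j : λ_j(Σ) = μ_r}` (eigenvalues `λ_j` with multiplicities, 0-indexed). -/
def Delta (S : CovOp H) (r : ℕ) : Set ℕ := {j | lam S.toCLM j = S.μ r}

/-- `μ r` is a simple eigenvalue with (unit) eigenvector `θ`, i.e. `P r = θ ⊗ θ`. -/
def SimpleVec (S : CovOp H) (r : ℕ) (θ : H) : Prop :=
  ‖θ‖ = 1 ∧ ∀ x : H, S.P r x = ⟪θ, x⟫ • θ

/-- `L_r(E) x = P_r E C_r x + C_r E P_r x`, with `P_r = θ ⊗ θ`. -/
def L (S : CovOp H) (r : ℕ) (θ : H) (E : H →L[ℝ] H) (x : H) : H :=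
  ⟪θ, E (S.C r x)⟫ • θ + S.C r (E (⟪θ, x⟫ • θ))

/-- the class `𝒮^{(r)}(rk, a, s0, u)`. -/
def memS (S : CovOp H) (r : ℕ) (u : H) (rk a s0 : ℝ) : Prop :=
  S.effRank ≤ rk ∧ ‖S.toCLM‖ / S.gbar r ≤ a ∧ s0 ^ 2 ≤ S.sigmaSq r u

/-- the open class `𝒮̊^{(r)}(rk, a, s0, u)`. -/
def memSo (S : CovOp H) (r : ℕ) (u : H) (rk a s0 : ℝ) : Prop :=
  S.effRank < rk ∧ ‖S.toCLM‖ / S.gbar r < a ∧ s0 ^ 2 < S.sigmaSq r u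

/-- `A_r(Σ) = 2 ∑_{s ≠ r} μ_r μ_s m_s / (μ_r - μ_s)²`. -/
def Ar (S : CovOp H) (r : ℕ) : ℝ :=
  2 * ∑' s, (if s = r then 0 else S.μ r * S.μ s * (S.m s : ℝ) / (S.μ r - S.μ s) ^ 2)

end CovOp

/-- `ν` is a centered Gaussian measure on `H` with covariance operator `A`. -/
def IsGaussian [MeasurableSpace H] (ν : Measure H) (A : H →L[ℝ] H) : Prop :=
  IsProbabilityMeasure ν ∧
    ∀ u : H, ν.map (fun x => ⟪x, u⟫) = gaussianReal 0 (Real.toNNReal ⟪A u, u⟫)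

/-- standard normal distribution function. -/
def Phi (x : ℝ) : ℝ := ((gaussianReal 0 1) (Iic x)).toReal

/-- `E ℓ(Z)`, `Z` standard normal. -/
def stdGaussExp (f : ℝ → ℝ) : ℝ := ∫ z, f z ∂(gaussianReal 0 1)

/-- Assumption 3.1 on the loss function. -/
structure IsLoss (f : ℝ → ℝ) (c₁ c₂ : ℝ) : Prop where
  c₁_pos : 0 < c₁
  c₂_pos : 0 < c₂
  nonneg : ∀ x, 0 ≤ f x
  zero : f 0 = 0
  even : ∀ x, f (-x) = f x
  mono : MonotoneOn f (Ici 0)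
  conv : ConvexOn ℝ (Ici 0) f
  bound : ∀ x, 0 ≤ x → f x ≤ c₁ * Real.exp (c₂ * x)

/-- the bias parameter `b_r = E⟨θ̂_r, θ_r⟩² - 1` for an estimator `est` based on a
sample of `k` i.i.d. observations from `ν`. -/
def biasParam [MeasurableSpace H] {k : ℕ} (ν : Measure H) (θ : H)
    (est : (Fin k → H) → H) : ℝ :=
  (∫ x, ⟪est x, θ⟫ ^ 2 ∂(Measure.pi fun _ : Fin k => ν)) - 1

/-- `est` is a valid selection of the estimator `θ̂_r^δ` with `δ = τ‖Σ̂‖`: a unit vector,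
aligned with `θ`, lying in the direct sum of eigenspaces of `Σ̂` for eigenvalues in the
`r`-th `δ`-cluster of `σ(Σ̂)` (whenever that space is nontrivial). -/
def clusterSel (r : ℕ) (θ : H) (τ : ℝ) {k : ℕ} (est : (Fin k → H) → H) : Prop :=
  ∀ x : Fin k → H,
    ‖est x‖ = 1 ∧ 0 ≤ ⟪est x, θ⟫ ∧
      (clusterSpace (sampleCov x) (cluster (τ * ‖sampleCov x‖) (spec0 (sampleCov x)) r) ≠ ⊥ →
        est x ∈ clusterSpace (sampleCov x) (cluster (τ * ‖sampleCov x‖) (spec0 (sampleCov x)) r))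

/-- `est` is a valid selection of the empirical eigenvector `θ̂_r`: a unit vector, aligned
with `θ`, which is an eigenvector of `Σ̂` for an eigenvalue `λ_j(Σ̂)` with `j ∈ Δ_r`
(whenever such an eigenvector exists). -/
def eigSel (S : CovOp H) (r : ℕ) (θ : H) {k : ℕ} (est : (Fin k → H) → H) : Prop :=
  ∀ x : Fin k → H,
    ‖est x‖ = 1 ∧ 0 ≤ ⟪est x, θ⟫ ∧
      ((∃ v : H, ‖v‖ = 1 ∧ ∃ j ∈ S.Delta r, sampleCov x v = lam (sampleCov x) j • v) →
        ∃ j ∈ S.Delta r, sampleCov x (est x) = lam (sampleCov x) j • est x)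


namespace CovOp
variable (S : CovOp H)

lemma P_inner_orth {s t : ℕ} (h : s ≠ t) (x y : H) : ⟪S.P s x, S.P t y⟫ = 0 := by
  rw [S.P_symm, S.P_orth s t h, inner_zero_right]

lemma P_bessel (x : H) (F : Finset ℕ) : ∑ s ∈ F, ‖S.P s x‖ ^ 2 ≤ ‖x‖ ^ 2 := by
  have h1 : ∀ s, ⟪S.P s x, x⟫ = ‖S.P s x‖ ^ 2 := by
    intro s
    rw [← real_inner_self_eq_norm_sq, S.P_symm, S.P_symm, S.P_idem]
  have h2 : ⟪∑ s ∈ F, S.P s x, x⟫ = ∑ s ∈ F, ‖S.P s x‖ ^ 2 := by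
    rw [sum_inner]; exact Finset.sum_congr rfl fun s _ => h1 s
  have h3 : ‖∑ s ∈ F, S.P s x‖ ^ 2 = ∑ s ∈ F, ‖S.P s x‖ ^ 2 := by
    rw [← real_inner_self_eq_norm_sq, sum_inner]
    refine Finset.sum_congr rfl fun s hs => ?_
    rw [inner_sum, Finset.sum_eq_single s]
    · rw [real_inner_self_eq_norm_sq]
    · intro b _ hb; exact S.P_inner_orth hb.symm _ _
    · intro h; exact absurd hs h
  have h4 := real_inner_le_norm (∑ s ∈ F, S.P s x) x
  rw [h2, ← h3] at h4
  rw [← h3]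
  nlinarith [norm_nonneg (∑ s ∈ F, S.P s x), norm_nonneg x,
    sq_nonneg (‖∑ s ∈ F, S.P s x‖ - ‖x‖)]

lemma C_coef_bdd (r : ℕ) : ∃ B : ℝ, ∀ s, (if s = r then 0 else (S.μ r - S.μ s)⁻¹) ^ 2 ≤ B := by
  have h : Tendsto (fun s => (if s = r then 0 else (S.μ r - S.μ s)⁻¹) ^ 2) atTop
      (𝓝 (((S.μ r - 0)⁻¹) ^ 2)) := by
    have h1 : Tendsto (fun s => ((S.μ r - S.μ s)⁻¹) ^ 2) atTop (𝓝 (((S.μ r - 0)⁻¹) ^ 2)) := by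
      refine ((tendsto_const_nhds.sub S.μ_lim).inv₀ ?_).pow 2
      rw [sub_zero]; exact (S.μ_pos r).ne'
    refine h1.congr' ?_
    filter_upwards [eventually_gt_atTop r] with s hs
    rw [if_neg hs.ne']
  obtain ⟨B, hB⟩ := h.bddAbove_range
  exact ⟨B, fun s => hB ⟨s, rfl⟩⟩

lemma C_hasSum (r : ℕ) (x : H) :
    HasSum (fun s => (if s = r then 0 else (S.μ r - S.μ s)⁻¹) • S.P s x) (S.C r x) := by
  refine Summable.hasSum ?_
  obtain ⟨B, hB⟩ := S.C_coef_bdd r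
  have hV : OrthogonalFamily ℝ (fun s => LinearMap.range (S.P s).toLinearMap)
      (fun s => (LinearMap.range (S.P s).toLinearMap).subtypeₗᵢ) := by
    intro s t hst v w
    obtain ⟨_, a, rfl⟩ := v
    obtain ⟨_, b, rfl⟩ := w
    exact S.P_inner_orth hst a b
  have key := (hV.summable_iff_norm_sq_summable
    (fun s => ⟨(if s = r then 0 else (S.μ r - S.μ s)⁻¹) • S.P s x,
      ⟨(if s = r then 0 else (S.μ r - S.μ s)⁻¹) • x, by rw [map_smul]; rfl⟩⟩)).2 ?_
  · exact key
  · have hs : Summable fun s => ‖S.P s x‖ ^ 2 :=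
      summable_of_sum_le (fun _ => sq_nonneg _) (S.P_bessel x)
    refine Summable.of_nonneg_of_le (fun _ => sq_nonneg _) (fun s => ?_) (hs.mul_left B)
    show ‖(if s = r then 0 else (S.μ r - S.μ s)⁻¹) • S.P s x‖ ^ 2 ≤ _
    rw [norm_smul, mul_pow, Real.norm_eq_abs, sq_abs]
    exact mul_le_mul_of_nonneg_right (hB s) (sq_nonneg _)

lemma C_symm (r : ℕ) (x y : H) : ⟪S.C r x, y⟫ = ⟪x, S.C r y⟫ := by
  have h1 := (S.C_hasSum r x).mapL (innerSL ℝ y)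
  have h2 := (S.C_hasSum r y).mapL (innerSL ℝ x)
  rw [real_inner_comm]
  refine h1.unique ?_
  convert h2 using 2 with s
  · simp only [innerSL_apply_apply, inner_smul_right]
    rw [real_inner_comm, S.P_symm]
  · rfl

variable {S} {r : ℕ} {θ : H}

lemma P_theta (h : S.SimpleVec r θ) : S.P r θ = θ := by
  rw [h.2, real_inner_self_eq_norm_sq, h.1]; simp

lemma P_theta_ne (h : S.SimpleVec r θ) {s : ℕ} (hs : s ≠ r) : S.P s θ = 0 := by
  rw [← P_theta h, S.P_orth s r hs]

lemma C_theta (h : S.SimpleVec r θ) : S.C r θ = 0 := by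
  refine (S.C_hasSum r θ).unique ?_
  convert hasSum_zero using 2 with s
  by_cases hs : s = r
  · simp [hs]
  · simp [P_theta_ne h hs]

lemma toCLM_theta (h : S.SimpleVec r θ) : S.toCLM θ = S.μ r • θ := by
  refine (S.decomp θ).unique ?_
  convert hasSum_single r ?_ using 1
  · rw [P_theta h]
  · intro s hs
    simp [P_theta_ne h hs]

lemma inner_theta_C (h : S.SimpleVec r θ) (u : H) : ⟪θ, S.C r u⟫ = 0 := by
  rw [← S.C_symm, C_theta h, inner_zero_left]

lemma toCLM_symm (x y : H) : ⟪S.toCLM x, y⟫ = ⟪x, S.toCLM y⟫ := by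
  have h1 := (S.decomp x).mapL (innerSL ℝ y)
  have h2 := (S.decomp y).mapL (innerSL ℝ x)
  rw [real_inner_comm]
  refine h1.unique ?_
  convert h2 using 2 with s
  · simp only [innerSL_apply_apply, inner_smul_right]
    rw [real_inner_comm, S.P_symm]
  · rfl

lemma toCLM_nonneg (x : H) : 0 ≤ ⟪S.toCLM x, x⟫ := by
  have h1 := (S.decomp x).mapL (innerSL ℝ x)
  rw [real_inner_comm]
  refine h1.nonneg fun s => ?_
  simp only [innerSL_apply_apply, inner_smul_right]
  refine mul_nonneg (S.μ_pos s).le ?_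
  rw [← S.P_idem, ← S.P_symm]
  exact real_inner_self_nonneg

lemma L_eq (h : S.SimpleVec r θ) {n : ℕ} (x : Fin n → H) (u : H) :
    ⟪S.L r θ (sampleCov x - S.toCLM) θ, u⟫ =
      (n : ℝ)⁻¹ * ∑ j, ⟪x j, θ⟫ * ⟪x j, S.C r u⟫ := by
  have hθ : ⟪θ, θ⟫ = 1 := by rw [real_inner_self_eq_norm_sq, h.1]; simp
  unfold L
  rw [C_theta h, map_zero, inner_zero_right, zero_smul, zero_add, hθ, one_smul, S.C_symm]
  rw [_root_.sub_apply, toCLM_theta h, inner_sub_left, inner_smul_left,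
    inner_theta_C h, mul_zero, sub_zero]
  simp only [sampleCov, _root_.smul_apply, inner_smul_left,
    _root_.sum_apply, sum_inner, outer, ContinuousLinearMap.smulRight_apply,
    innerSL_apply_apply]
  simp

lemma law_joint [MeasurableSpace H] [BorelSpace H] (h : S.SimpleVec r θ) {ν : Measure H}
    (hν : IsGaussian ν S.toCLM) (u : H) :
    ν.map (fun x => (⟪x, θ⟫, ⟪x, S.C r u⟫)) =
      ((gaussianReal 0 1).prod (gaussianReal 0 1)).map (fun p : ℝ × ℝ =>
        (Real.sqrt (S.μ r) * p.1, Real.sqrt ⟪S.toCLM (S.C r u), S.C r u⟫ * p.2)) := by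
  have := hν.1
  set v := S.C r u with hv
  set q := ⟪S.toCLM v, v⟫ with hq
  have hq0 : 0 ≤ q := toCLM_nonneg v
  have hμ0 := (S.μ_pos r).le
  have hθv : ⟪θ, v⟫ = 0 := inner_theta_C h u
  have hθ : ⟪θ, θ⟫ = 1 := by rw [real_inner_self_eq_norm_sq, h.1]; simp
  have hm : ∀ w : H, Measurable (fun x : H => ⟪x, w⟫) := fun w =>
    (continuous_id.inner continuous_const).measurable
  have e : ((gaussianReal 0 1).prod (gaussianReal 0 1)).map (fun p : ℝ × ℝ =>
        (Real.sqrt (S.μ r) * p.1, Real.sqrt q * p.2)) =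
      (gaussianReal 0 (S.μ r).toNNReal).prod (gaussianReal 0 q.toNNReal) := by
    rw [show (fun p : ℝ × ℝ => (Real.sqrt (S.μ r) * p.1, Real.sqrt q * p.2)) =
      Prod.map (fun x => Real.sqrt (S.μ r) * x) (fun x => Real.sqrt q * x) from rfl,
      ← Measure.map_prod_map _ _ (by fun_prop) (by fun_prop),
      gaussianReal_map_const_mul, gaussianReal_map_const_mul]
    congr 2
    · simp
    · ext; simp [Real.sq_sqrt hμ0, hμ0]
    · simp
    · ext; simp [Real.sq_sqrt hq0, hq0]
  rw [e]
  have : IsProbabilityMeasure (ν.map (fun x => (⟪x, θ⟫, ⟪x, v⟫))) :=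
    Measure.isProbabilityMeasure_map ((hm θ).prodMk (hm v)).aemeasurable
  refine Measure.ext_of_charFunDual ?_
  ext L
  rw [charFunDual_prod, charFunDual_eq_charFun_map_one, charFunDual_eq_charFun_map_one,
    charFunDual_eq_charFun_map_one]
  set s := L (1, 0) with hs
  set t := L (0, 1) with ht
  have hL : ∀ a b : ℝ, L (a, b) = s * a + t * b := by
    intro a b
    have : ((a, b) : ℝ × ℝ) = a • ((1, 0) : ℝ × ℝ) + b • ((0, 1) : ℝ × ℝ) := by simp
    rw [this, map_add, map_smul, map_smul, smul_eq_mul, smul_eq_mul, mul_comm a, mul_comm b]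
  have e1 : (ν.map (fun x => (⟪x, θ⟫, ⟪x, v⟫))).map L =
      gaussianReal 0 (s ^ 2 * S.μ r + t ^ 2 * q).toNNReal := by
    rw [Measure.map_map L.continuous.measurable ((hm θ).prodMk (hm v))]
    have : (L ∘ fun x : H => (⟪x, θ⟫, ⟪x, v⟫)) = fun x => ⟪x, s • θ + t • v⟫ := by
      ext x
      simp only [Function.comp, hL, inner_add_right, inner_smul_right]
    rw [this, hν.2]
    congr 2
    rw [map_add, map_smul, map_smul, toCLM_theta h]
    simp only [inner_add_left, inner_add_right, inner_smul_left, inner_smul_right, hθ, hθv]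
    have h0 : ⟪S.toCLM v, θ⟫ = 0 := by
      rw [toCLM_symm, toCLM_theta h, inner_smul_right, real_inner_comm, hθv, mul_zero]
    rw [h0, ← hq]
    simp
    ring
  have e2 : (gaussianReal 0 (S.μ r).toNNReal).map (L.comp (.inl ℝ ℝ ℝ)) =
      gaussianReal 0 (s ^ 2 * S.μ r).toNNReal := by
    have : ⇑(L.comp (.inl ℝ ℝ ℝ)) = fun x => s * x := by
      ext x; simp [hL]
    rw [this, gaussianReal_map_const_mul]
    congr 1
    · simp
    · ext; simp [hμ0, mul_nonneg (sq_nonneg s) hμ0]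
  have e3 : (gaussianReal 0 q.toNNReal).map (L.comp (.inr ℝ ℝ ℝ)) =
      gaussianReal 0 (t ^ 2 * q).toNNReal := by
    have : ⇑(L.comp (.inr ℝ ℝ ℝ)) = fun x => t * x := by
      ext x; simp [hL]
    rw [this, gaussianReal_map_const_mul]
    congr 1
    · simp
    · ext; simp [hq0, mul_nonneg (sq_nonneg t) hq0]
  rw [e1, e2, e3]
  simp only [charFun_gaussianReal]
  rw [← Complex.exp_add]
  have p1 := mul_nonneg (sq_nonneg s) hμ0
  have p2 := mul_nonneg (sq_nonneg t) hq0
  congr 1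
  rw [Real.toNNReal_add p1 p2]
  push_cast
  ring

end CovOp
local notation "γ" => gaussianReal 0 1

lemma gauss_sq_exp {a : ℝ} (ha0 : 0 ≤ a) (ha : a ≤ 1 / 4) :
    Integrable (fun x => Real.exp (a / 2 * x ^ 2)) γ ∧
    ∫ x, Real.exp (a / 2 * x ^ 2) ∂γ ≤ Real.exp a := by
  have hf : ∀ x : ℝ, gaussianPDFReal 0 1 x * Real.exp (a / 2 * x ^ 2) =
      (Real.sqrt (2 * Real.pi))⁻¹ * Real.exp (-((1 - a) / 2) * x ^ 2) := by
    intro x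
    simp only [gaussianPDFReal, NNReal.coe_one, mul_one, sub_zero]
    rw [mul_assoc, ← Real.exp_add]
    congr 2; ring
  constructor
  · rw [gaussianReal_of_var_ne_zero _ one_ne_zero,
      integrable_withDensity_iff_integrable_smul' (measurable_gaussianPDF _ _)
        (by simp [gaussianPDF_lt_top])]
    simp only [toReal_gaussianPDF, smul_eq_mul, hf]
    exact (integrable_exp_neg_mul_sq (by linarith)).const_mul _
  · rw [integral_gaussianReal_eq_integral_smul one_ne_zero]
    simp only [smul_eq_mul, hf]
    rw [integral_const_mul, integral_gaussian, ← Real.sqrt_inv, ← Real.sqrt_mul (by positivity)]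
    have : (2 * Real.pi)⁻¹ * (Real.pi / ((1 - a) / 2)) = (1 - a)⁻¹ := by
      have : (1 - a) ≠ 0 := by linarith
      field_simp
    rw [this]
    refine Real.sqrt_le_iff.2 ⟨(Real.exp_pos _).le, ?_⟩
    rw [← Real.exp_nat_mul]
    refine inv_le_of_inv_le₀ (Real.exp_pos _) ?_
    rw [← Real.exp_neg]
    have h1 : 1 + 2 * a ≤ Real.exp (2 * a) := by linarith [Real.add_one_le_exp (2 * a)]
    rw [Real.exp_neg]
    have h2 : (Real.exp (2 * a))⁻¹ ≤ (1 + 2 * a)⁻¹ := inv_anti₀ (by linarith) h1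
    refine le_trans (by exact_mod_cast h2) (?_ : (1 + 2 * a)⁻¹ ≤ _)
    rw [inv_le_iff_one_le_mul₀ (by linarith)]
    nlinarith

lemma gauss_prod_exp {l : ℝ} (hl : l ^ 2 ≤ 1 / 4) :
    Integrable (fun p : ℝ × ℝ => Real.exp (l * (p.1 * p.2))) ((γ).prod γ) ∧
    ∫ p, Real.exp (l * (p.1 * p.2)) ∂((γ).prod γ) ≤ Real.exp (l ^ 2) := by
  have hin : ∀ x : ℝ, ∫ y, Real.exp (l * (x * y)) ∂γ = Real.exp (l ^ 2 / 2 * x ^ 2) := by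
    intro x
    have := congrFun (mgf_id_gaussianReal (μ := 0) (v := 1)) (l * x)
    simp only [mgf, id] at this
    simp only [← mul_assoc, this]
    congr 1; simp; ring
  have hI : Integrable (fun p : ℝ × ℝ => Real.exp (l * (p.1 * p.2))) ((γ).prod γ) := by
    rw [integrable_prod_iff (by fun_prop)]
    constructor
    · refine ae_of_all _ fun x => ?_
      simp only [← mul_assoc]
      exact integrable_exp_mul_gaussianReal _
    · simp only [Real.norm_eq_abs, Real.abs_exp, hin]
      exact (gauss_sq_exp (sq_nonneg l) hl).1
  refine ⟨hI, ?_⟩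
  rw [integral_prod _ hI]
  simp only [hin]
  exact (gauss_sq_exp (sq_nonneg l) hl).2

lemma chernoff (n : ℕ) {l : ℝ} (hl : l ^ 2 ≤ 1 / 4) (s : ℝ) :
    ((Measure.pi fun _ : Fin n => (γ).prod γ).real {p | s ≤ l * ∑ j, (p j).1 * (p j).2}) ≤
      Real.exp (n * l ^ 2 - s) := by
  have hI : Integrable (fun p : Fin n → ℝ × ℝ => ∏ j, Real.exp (l * ((p j).1 * (p j).2)))
    (Measure.pi fun _ : Fin n => (γ).prod γ) :=
    Integrable.fintype_prod (μ := fun _ : Fin n => (γ).prod γ)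
      (f := fun (_ : Fin n) (p : ℝ × ℝ) => Real.exp (l * (p.1 * p.2)))
      fun _ => (gauss_prod_exp hl).1
  have hE : ∀ p : Fin n → ℝ × ℝ, ∏ j, Real.exp (l * ((p j).1 * (p j).2)) =
      Real.exp (l * ∑ j, (p j).1 * (p j).2) := by
    intro p; rw [Finset.mul_sum, Real.exp_sum]
  have hint : ∫ p, ∏ j, Real.exp (l * ((p j).1 * (p j).2))
      ∂(Measure.pi fun _ : Fin n => (γ).prod γ) ≤ Real.exp (n * l ^ 2) := by
    rw [integral_fintype_prod_eq_prod (fun (_ : Fin n) (p : ℝ × ℝ) => Real.exp (l * (p.1 * p.2)))]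
    rw [Finset.prod_const, Finset.card_univ, Fintype.card_fin, Real.exp_nat_mul]
    exact pow_le_pow_left₀ (integral_nonneg fun _ => (Real.exp_pos _).le) (gauss_prod_exp hl).2 n
  have hm := mul_meas_ge_le_integral_of_nonneg (ae_of_all _ fun p => by positivity) hI (Real.exp s)
  have hset : {p : Fin n → ℝ × ℝ | Real.exp s ≤ ∏ j, Real.exp (l * ((p j).1 * (p j).2))} =
      {p | s ≤ l * ∑ j, (p j).1 * (p j).2} := by
    ext p; simp only [mem_ofPred_eq, hE, Real.exp_le_exp]
  rw [hset] at hm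
  rw [Real.exp_sub, le_div_iff₀ (Real.exp_pos _), mul_comm]
  exact hm.trans hint

lemma tail (n : ℕ) (hn : 1 ≤ n) {t : ℝ} (ht : 1 ≤ t) :
    1 - Real.exp (-t) ≤ ((Measure.pi fun _ : Fin n => (γ).prod γ)
      {p | |(n : ℝ)⁻¹ * ∑ j, (p j).1 * (p j).2| ≤ 4 * max (Real.sqrt (t / n)) (t / n)}).toReal := by
  have hn0 : (0 : ℝ) < n := by exact_mod_cast hn
  set P := Measure.pi fun _ : Fin n => (γ).prod γ
  set M := max (Real.sqrt (t / n)) (t / n) with hM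
  have hM0 : 0 ≤ M := le_max_of_le_left (Real.sqrt_nonneg _)
  obtain ⟨l, hl0, hl, hb⟩ : ∃ l : ℝ, 0 < l ∧ l ^ 2 ≤ 1 / 4 ∧
      n * l ^ 2 - l * (n * (4 * M)) ≤ - (7 / 4) * t := by
    have htn : 0 < t / n := by positivity
    rcases le_total t n with h | h
    · refine ⟨Real.sqrt (t / n) / 2, by positivity, ?_, ?_⟩
      · rw [div_pow, Real.sq_sqrt htn.le]
        have : t / n ≤ 1 := (div_le_one hn0).2 h
        linarith
      · have h1 : Real.sqrt (t / n) ≤ M := le_max_left _ _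
        have h2 : Real.sqrt (t / n) ^ 2 = t / n := Real.sq_sqrt htn.le
        have h4 : Real.sqrt (t / n) ^ 2 ≤ Real.sqrt (t / n) * M := by
          nlinarith [Real.sqrt_nonneg (t / n)]
        have h3 : n * Real.sqrt (t / n) ^ 2 = t := by rw [h2]; field_simp
        nlinarith [mul_le_mul_of_nonneg_left h4 hn0.le]
    · refine ⟨1 / 2, by norm_num, by norm_num, ?_⟩
      have h1 : t / n ≤ M := le_max_right _ _
      have h3 : n * (t / n) = t := by field_simp
      nlinarith [mul_le_mul_of_nonneg_left h1 hn0.le]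
  have c1 := chernoff n hl (l * (n * (4 * M)))
  have c2 := chernoff n (l := -l) (by rwa [neg_sq]) (l * (n * (4 * M)))
  rw [neg_sq] at c2
  have hmeas : MeasurableSet {p : Fin n → ℝ × ℝ |
      |(n : ℝ)⁻¹ * ∑ j, (p j).1 * (p j).2| ≤ 4 * M} :=
    measurableSet_le (by fun_prop) (by fun_prop)
  have hc : P.real {p : Fin n → ℝ × ℝ | |(n : ℝ)⁻¹ * ∑ j, (p j).1 * (p j).2| ≤ 4 * M}ᶜ ≤
      Real.exp (n * l ^ 2 - l * (n * (4 * M))) + Real.exp (n * l ^ 2 - l * (n * (4 * M))) := by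
    refine le_trans ?_ (add_le_add c1 c2)
    refine le_trans (measureReal_mono ?_) (measureReal_union_le _ _)
    intro p hp
    simp only [mem_compl_iff, mem_ofPred_eq, not_le, abs_mul, abs_inv, Nat.abs_cast] at hp
    rw [lt_inv_mul_iff₀ hn0] at hp
    rcases lt_abs.1 hp with h | h
    · left; simp only [mem_ofPred_eq]; exact mul_le_mul_of_nonneg_left h.le hl0.le
    · right; simp only [mem_ofPred_eq]
      nlinarith [mul_le_mul_of_nonneg_left h.le hl0.le]
  rw [probReal_compl_eq_one_sub hmeas] at hc
  have h2 : Real.exp (n * l ^ 2 - l * (n * (4 * M))) ≤ Real.exp (- (7 / 4) * t) :=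
    Real.exp_le_exp.2 hb
  have h3 : 2 * Real.exp (- (7 / 4) * t) ≤ Real.exp (-t) := by
    have : Real.exp (-t) = Real.exp (3 / 4 * t) * Real.exp (- (7 / 4) * t) := by
      rw [← Real.exp_add]; congr 1; ring
    rw [this]
    refine mul_le_mul_of_nonneg_right ?_ (Real.exp_pos _).le
    have : Real.exp (Real.log 2) ≤ Real.exp (3 / 4 * t) :=
      Real.exp_le_exp.2 (by linarith [Real.log_two_lt_d9])
    rwa [Real.exp_log (by norm_num)] at this
  change _ ≤ P.real _
  linarith

lemma Phi_eq (x : ℝ) : Phi x = (γ).real (Iic x) := rfl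

lemma Phi_diff_aux {x y : ℝ} (hxy : x ≤ y) (h : 0 ≤ x * y) :
    |Phi y - Phi x| ≤ |y - x| * Real.exp (-(min |x| |y|) ^ 2 / 2) := by
  have e : Phi y - Phi x = (γ).real (Ioc x y) := by
    have hd : Ioc x y = Iic y \ Iic x := by
      ext z; simp [and_comm]
    rw [Phi_eq, Phi_eq, hd,
      measureReal_sdiff (Iic_subset_Iic.2 hxy) measurableSet_Iic]
  rw [e, abs_of_nonneg measureReal_nonneg, abs_of_nonneg (sub_nonneg.2 hxy)]
  set B := Real.exp (-(min |x| |y|) ^ 2 / 2) with hB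
  have hb : ∀ z ∈ Ioc x y, gaussianPDFReal 0 1 z ≤ B := by
    intro z hz
    have hm : min |x| |y| ≤ |z| := by
      rcases le_or_gt 0 x with h0 | h0
      · refine (min_le_left _ _).trans ?_
        rw [abs_of_nonneg h0, abs_of_nonneg (h0.trans hz.1.le)]; exact hz.1.le
      · have hy : y ≤ 0 := by
          by_contra hy; push Not at hy; nlinarith
        refine (min_le_right _ _).trans ?_
        rw [abs_of_nonpos hy, abs_of_nonpos (hz.2.trans hy)]; linarith [hz.2]
    have hm2 : (min |x| |y|) ^ 2 ≤ z ^ 2 := by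
      rw [← sq_abs z]; exact pow_le_pow_left₀ (by positivity) hm 2
    simp only [gaussianPDFReal, NNReal.coe_one, mul_one, sub_zero]
    refine (mul_le_of_le_one_left (Real.exp_pos _).le ?_).trans (Real.exp_le_exp.2 (by linarith))
    refine inv_le_one_of_one_le₀ (Real.one_le_sqrt.2 ?_)
    linarith [Real.pi_gt_three]
  rw [Measure.real, gaussianReal_apply_eq_integral _ one_ne_zero,
    ENNReal.toReal_ofReal (integral_nonneg fun _ => gaussianPDFReal_nonneg _ _ _)]
  have : ∫ z in Ioc x y, gaussianPDFReal 0 1 z ≤ ∫ _ in Ioc x y, B := by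
    refine setIntegral_mono_on (integrable_gaussianPDFReal _ _).integrableOn ?_
      measurableSet_Ioc hb
    exact integrableOn_const (by simp)
  refine this.trans ?_
  simp [hxy]

lemma Phi_diff {x y : ℝ} (h : 0 ≤ x * y) :
    |Phi y - Phi x| ≤ |y - x| * Real.exp (-(min |x| |y|) ^ 2 / 2) := by
  rcases le_total x y with h1 | h1
  · exact Phi_diff_aux h1 h
  · rw [abs_sub_comm, abs_sub_comm y x, min_comm]
    exact Phi_diff_aux h1 (by rwa [mul_comm])

lemma mul_exp_le {m : ℝ} : m * Real.exp (-m ^ 2 / 2) ≤ 1 := by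
  rw [neg_div, Real.exp_neg, ← div_eq_mul_inv, div_le_one (Real.exp_pos _)]
  nlinarith [Real.add_one_le_exp (m ^ 2 / 2), sq_nonneg (m - 1)]

lemma Phi_scale {R : ℝ} (hR : 1 / 2 ≤ R) (x : ℝ) : |Phi (x / R) - Phi x| ≤ 2 * |R ^ 2 - 1| := by
  have hR0 : 0 < R := by linarith
  have h := Phi_diff (x := x) (y := x / R)
    (by rw [← mul_div_assoc]; exact div_nonneg (mul_self_nonneg x) hR0.le)
  refine h.trans ?_
  rw [abs_div, abs_of_pos hR0]
  have hx := abs_nonneg x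
  rcases le_total 1 R with h1 | h1
  · have e1 : min |x| (|x| / R) = |x| / R := min_eq_right (div_le_self hx h1)
    have e2 : |x / R - x| = (|x| / R) * (R - 1) := by
      have : x / R - x = - (x / R * (R - 1)) := by field_simp; ring
      rw [this, abs_neg, abs_mul, abs_div, abs_of_pos hR0, abs_of_nonneg (sub_nonneg.2 h1)]
    rw [e1, e2, abs_of_nonneg (by nlinarith : 0 ≤ R ^ 2 - 1)]
    have := mul_exp_le (m := |x| / R)
    calc _ = (R - 1) * (|x| / R * Real.exp (-(|x| / R) ^ 2 / 2)) := by ring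
      _ ≤ (R - 1) * 1 := mul_le_mul_of_nonneg_left this (by linarith)
      _ ≤ _ := by nlinarith
  · have e1 : min |x| (|x| / R) = |x| := min_eq_left (by
      rw [le_div_iff₀ hR0]; nlinarith)
    have e2 : |x / R - x| = |x| * ((1 - R) / R) := by
      have : x / R - x = x * ((1 - R) / R) := by field_simp
      rw [this, abs_mul, abs_of_nonneg (div_nonneg (sub_nonneg.2 h1) hR0.le)]
    rw [e1, e2, abs_of_nonpos (by nlinarith : R ^ 2 - 1 ≤ 0)]
    have := mul_exp_le (m := |x|)
    have h3 : (1 - R) / R ≤ 2 * (1 - R) := by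
      rw [div_le_iff₀ hR0]; nlinarith
    calc _ = (1 - R) / R * (|x| * Real.exp (-|x| ^ 2 / 2)) := by ring
      _ ≤ (1 - R) / R * 1 :=
        mul_le_mul_of_nonneg_left this (div_nonneg (sub_nonneg.2 h1) hR0.le)
      _ ≤ _ := by nlinarith

lemma gauss_scale {w : ℝ} (hw : 0 ≤ w) (x : ℝ) :
    |(gaussianReal 0 w.toNNReal).real (Iic x) - Phi x| ≤ 2 * |w - 1| := by
  rcases lt_or_ge w (1 / 4) with h | h
  · have h1 : (gaussianReal 0 w.toNNReal).real (Iic x) ≤ 1 := measureReal_le_one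
    have h2 : 0 ≤ (gaussianReal 0 w.toNNReal).real (Iic x) := measureReal_nonneg
    have h3 : Phi x ≤ 1 := measureReal_le_one (μ := γ)
    have h4 : 0 ≤ Phi x := measureReal_nonneg (μ := γ)
    rw [abs_of_nonpos (by linarith : w - 1 ≤ 0)]
    refine (abs_le.2 ⟨?_, ?_⟩ : _ ≤ (1 : ℝ)).trans ?_ <;> linarith
  · have hR : 1 / 2 ≤ Real.sqrt w := Real.le_sqrt_of_sq_le (by linarith)
    have hR0 : 0 < Real.sqrt w := by linarith
    have e : gaussianReal 0 w.toNNReal = (γ).map (fun z => Real.sqrt w * z) := by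
      rw [gaussianReal_map_const_mul]
      congr 1
      · simp
      · ext; simp [Real.sq_sqrt hw, hw]
    have e2 : (gaussianReal 0 w.toNNReal).real (Iic x) = Phi (x / Real.sqrt w) := by
      rw [e, map_measureReal_apply (by fun_prop) measurableSet_Iic, Phi_eq]
      congr 1
      ext z
      simp [le_div_iff₀' hR0]
    rw [e2]
    have := Phi_scale hR x
    rwa [Real.sq_sqrt hw] at this

lemma law_sum {n : ℕ} (c : Fin n → ℝ) :
    (Measure.pi fun _ : Fin n => γ).map (fun h => ∑ j, c j * h j) =
      gaussianReal 0 (∑ j, c j ^ 2).toNNReal := by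
  have hm : Measurable (fun h : Fin n → ℝ => ∑ j, c j * h j) := by fun_prop
  have : IsProbabilityMeasure ((Measure.pi fun _ : Fin n => γ).map (fun h => ∑ j, c j * h j)) :=
    Measure.isProbabilityMeasure_map hm.aemeasurable
  refine Measure.ext_of_charFun ?_
  ext t
  rw [charFun_apply_real, integral_map hm.aemeasurable (by fun_prop), charFun_gaussianReal]
  have h1 : ∀ h : Fin n → ℝ, Complex.exp (t * ((∑ j, c j * h j : ℝ) : ℂ) * Complex.I) =
      ∏ j, Complex.exp (((t * c j : ℝ) : ℂ) * (h j : ℂ) * Complex.I) := by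
    intro h
    rw [← Complex.exp_sum]
    congr 1
    push_cast
    rw [Finset.mul_sum, Finset.sum_mul]
    refine Finset.sum_congr rfl fun j _ => by ring
  simp only [h1]
  rw [integral_fintype_prod_eq_prod
    (fun (j : Fin n) (y : ℝ) => Complex.exp (((t * c j : ℝ) : ℂ) * (y : ℂ) * Complex.I))]
  simp only [← charFun_apply_real, charFun_gaussianReal]
  rw [← Complex.exp_sum]
  congr 1
  have h2 : 0 ≤ ∑ j, c j ^ 2 := Finset.sum_nonneg fun _ _ => sq_nonneg _
  rw [show (((∑ j, c j ^ 2).toNNReal : ℝ≥0) : ℂ) = ((∑ j, c j ^ 2 : ℝ) : ℂ) by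
    exact congrArg _ (Real.coe_toNNReal _ h2)]
  push_cast
  simp only [mul_zero, zero_mul, zero_sub, Finset.sum_mul, Finset.sum_div, ← Finset.sum_neg_distrib]
  refine Finset.sum_congr rfl fun j _ => by simp; ring

def KK : ℝ := Var[fun x => x ^ 2; γ]

lemma memLp_sq : MemLp (fun x : ℝ => x ^ 2) 2 γ := by
  have h := (memLp_id_gaussianReal (μ := 0) (v := 1) 4).integrable_norm_pow (p := 4) (by norm_num)
  rw [memLp_two_iff_integrable_sq (by fun_prop)]
  refine h.congr (ae_of_all _ fun x => ?_)
  simp only [id, Real.norm_eq_abs, Even.pow_abs (by decide : Even 4)]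
  ring

lemma int_sq : ∫ x, x ^ 2 ∂γ = 1 := by
  have h := variance_fun_id_gaussianReal (μ := 0) (v := 1)
  rw [variance_of_integral_eq_zero (by fun_prop) (by simp)] at h
  simpa using h

lemma dev (n : ℕ) (hn : 1 ≤ n) :
    Integrable (fun g : Fin n → ℝ => (n : ℝ)⁻¹ * ∑ j, g j ^ 2 - 1) (Measure.pi fun _ => γ) ∧
    ∫ g, |(n : ℝ)⁻¹ * ∑ j, g j ^ 2 - 1| ∂(Measure.pi fun _ : Fin n => γ) ≤
      Real.sqrt KK / Real.sqrt n := by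
  have hn0 : (0 : ℝ) < n := by exact_mod_cast hn
  set P := Measure.pi fun _ : Fin n => γ
  have hL : ∀ j : Fin n, MemLp (fun g : Fin n → ℝ => g j ^ 2) 2 P := fun j =>
    memLp_sq.comp_measurePreserving (measurePreserving_eval (fun _ : Fin n => γ) j)
  have hS : MemLp (fun g : Fin n → ℝ => ∑ j, g j ^ 2) 2 P :=
    memLp_finsetSum _ fun j _ => hL j
  have hY : MemLp (fun g : Fin n → ℝ => (n : ℝ)⁻¹ * ∑ j, g j ^ 2 - 1) 2 P :=
    (hS.const_mul _).sub (memLp_const 1)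
  have hmean : ∫ g, ∑ j, g j ^ 2 ∂P = n := by
    rw [integral_finsetSum _ fun j _ => (hL j).integrable (by norm_num)]
    have : ∀ j : Fin n, ∫ g, g j ^ 2 ∂P = 1 := by
      intro j
      rw [← int_sq]
      exact integral_comp_eval (μ := fun _ : Fin n => γ) (f := fun x : ℝ => x ^ 2) (by fun_prop)
    simp [this]
  have hmY : ∫ g, ((n : ℝ)⁻¹ * ∑ j, g j ^ 2 - 1) ∂P = 0 := by
    rw [integral_sub ((hS.integrable (by norm_num)).const_mul _) (integrable_const _),
      integral_const_mul, hmean]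
    simp [hn0.ne']
  have hvar : Var[fun g : Fin n → ℝ => ∑ j, g j ^ 2; P] = n * KK := by
    have := variance_sum_pi (μ := fun _ : Fin n => γ) (X := fun _ x => x ^ 2)
      (fun _ => memLp_sq)
    rw [show (∑ i, fun ω : Fin n → ℝ => ω i ^ 2) = fun g : Fin n → ℝ => ∑ j, g j ^ 2 by
      ext g; simp] at this
    rw [this]
    simp [KK]
  have hvY : ∫ g, ((n : ℝ)⁻¹ * ∑ j, g j ^ 2 - 1) ^ 2 ∂P = KK / n := by
    rw [← variance_of_integral_eq_zero hY.aemeasurable hmY,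
      variance_sub_const (hS.const_mul _).aestronglyMeasurable,
      variance_const_mul, hvar]
    field_simp
  refine ⟨hY.integrable (by norm_num), ?_⟩
  have h0 := variance_nonneg (fun g : Fin n → ℝ => |(n : ℝ)⁻¹ * ∑ j, g j ^ 2 - 1|) P
  have h1 := variance_eq_sub hY.abs
  simp only [Pi.pow_apply, Pi.abs_apply, sq_abs, hvY] at h1
  change Var[fun g : Fin n → ℝ => |(n : ℝ)⁻¹ * ∑ j, g j ^ 2 - 1|; P] = _ at h1
  rw [← Real.sqrt_div' _ hn0.le]
  exact Real.le_sqrt_of_sq_le (by linarith)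

lemma berry (n : ℕ) (hn : 1 ≤ n) (x : ℝ) :
    |((Measure.pi fun _ : Fin n => (γ).prod γ)
      {p | Real.sqrt n * ((n : ℝ)⁻¹ * ∑ j, (p j).1 * (p j).2) ≤ x}).toReal - Phi x| ≤
      2 * (Real.sqrt KK / Real.sqrt n) := by
  have hn0 : (0 : ℝ) < n := by exact_mod_cast hn
  set P := Measure.pi fun _ : Fin n => γ with hP
  set A : Set ((Fin n → ℝ) × (Fin n → ℝ)) :=
    {q | Real.sqrt n * ((n : ℝ)⁻¹ * ∑ j, q.1 j * q.2 j) ≤ x} with hA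
  have hAm : MeasurableSet A := measurableSet_le (by fun_prop) (by fun_prop)
  have mp := measurePreserving_arrowProdEquivProdArrow ℝ ℝ (Fin n) (fun _ => γ) (fun _ => γ)
  have e1 : (Measure.pi fun _ : Fin n => (γ).prod γ)
      {p | Real.sqrt n * ((n : ℝ)⁻¹ * ∑ j, (p j).1 * (p j).2) ≤ x} = (P.prod P) A := by
    rw [← mp.measure_preimage hAm.nullMeasurableSet]
    rfl
  set F : (Fin n → ℝ) → ℝ := fun g => P.real (Prod.mk g ⁻¹' A) with hF
  have hFm : Measurable F := (measurable_measure_prodMk_left hAm).ennreal_toReal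
  have hFi : Integrable F P := by
    refine Integrable.of_bound hFm.aestronglyMeasurable 1 (ae_of_all _ fun g => ?_)
    rw [Real.norm_eq_abs, abs_of_nonneg measureReal_nonneg]
    exact measureReal_le_one
  have e2 : ((P.prod P) A).toReal = ∫ g, F g ∂P := by
    rw [Measure.prod_apply hAm, ← integral_toReal]
    · rfl
    · exact (measurable_measure_prodMk_left hAm).aemeasurable
    · exact ae_of_all _ fun g => measure_lt_top _ _
  have e3 : ∀ g, F g = (gaussianReal 0 ((n : ℝ)⁻¹ * ∑ j, g j ^ 2).toNNReal).real (Iic x) := by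
    intro g
    have hl := law_sum (fun j => Real.sqrt n * (n : ℝ)⁻¹ * g j)
    have hc : ∑ j, (Real.sqrt n * (n : ℝ)⁻¹ * g j) ^ 2 = (n : ℝ)⁻¹ * ∑ j, g j ^ 2 := by
      simp only [mul_pow, ← Finset.mul_sum, Real.sq_sqrt hn0.le]
      field_simp
    rw [hc] at hl
    rw [← hl, map_measureReal_apply (by fun_prop) measurableSet_Iic]
    simp only [hF, Measure.real]
    congr 2
    ext h
    simp only [hA, mem_preimage, mem_ofPred_eq, mem_Iic, mul_assoc, ← Finset.mul_sum]
  obtain ⟨dI, d⟩ := dev n hn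
  rw [e1, e2]
  have e4 : ∫ g, F g ∂P - Phi x = ∫ g, (F g - Phi x) ∂P := by
    rw [integral_sub hFi (integrable_const _)]; simp
  rw [e4]
  refine (abs_integral_le_integral_abs).trans ?_
  refine le_trans ?_ (mul_le_mul_of_nonneg_left d (by norm_num))
  rw [← integral_const_mul]
  refine integral_mono (hFi.sub (integrable_const _)).abs (dI.abs.const_mul 2) fun g => ?_
  simp only [e3]
  exact gauss_scale (by positivity) x

lemma transfer [MeasurableSpace H] [BorelSpace H] {S : CovOp H} {r : ℕ} {θ : H}
    (h : S.SimpleVec r θ) {ν : Measure H} (hν : IsGaussian ν S.toCLM) (u : H) (n : ℕ)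
    {B : Set ℝ} (hB : MeasurableSet B) :
    (Measure.pi fun _ : Fin n => ν) {x | ⟪S.L r θ (sampleCov x - S.toCLM) θ, u⟫ ∈ B} =
    (Measure.pi fun _ : Fin n => (γ).prod γ)
      {p | Real.sqrt (S.sigmaSq r u) * ((n : ℝ)⁻¹ * ∑ j, (p j).1 * (p j).2) ∈ B} := by
  have := hν.1
  have hm : ∀ w : H, Measurable (fun x : H => ⟪x, w⟫) := fun w =>
    (continuous_id.inner continuous_const).measurable
  set f1 : H → ℝ × ℝ := fun x => (⟪x, θ⟫, ⟪x, S.C r u⟫) with hf1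
  set f2 : ℝ × ℝ → ℝ × ℝ := fun p =>
        (Real.sqrt (S.μ r) * p.1, Real.sqrt ⟪S.toCLM (S.C r u), S.C r u⟫ * p.2) with hf2
  have m1 : Measurable f1 := (hm _).prodMk (hm _)
  have m2 : Measurable f2 := by fun_prop
  have hlaw : ν.map f1 = ((γ).prod γ).map f2 := CovOp.law_joint h hν u
  have i1 : IsProbabilityMeasure (ν.map f1) := Measure.isProbabilityMeasure_map m1.aemeasurable
  have i2 : IsProbabilityMeasure (((γ).prod γ).map f2) :=
    Measure.isProbabilityMeasure_map m2.aemeasurable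
  have p1 := Measure.pi_map_pi (μ := fun _ : Fin n => ν) (f := fun _ => f1)
    (fun _ => m1.aemeasurable)
  have p2 := Measure.pi_map_pi (μ := fun _ : Fin n => (γ).prod γ) (f := fun _ => f2)
    (fun _ => m2.aemeasurable)
  have hpi : (Measure.pi fun _ : Fin n => ν).map (fun x j => f1 (x j)) =
      (Measure.pi fun _ : Fin n => (γ).prod γ).map (fun x j => f2 (x j)) := by
    rw [p1, p2, hlaw]
  set A : Set (Fin n → ℝ × ℝ) := {p | (n : ℝ)⁻¹ * ∑ j, (p j).1 * (p j).2 ∈ B} with hA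
  have hAm : MeasurableSet A := by
    have : Measurable fun p : Fin n → ℝ × ℝ => (n : ℝ)⁻¹ * ∑ j, (p j).1 * (p j).2 := by fun_prop
    exact this hB
  have hA2 := congrArg (fun m => m A) hpi
  rw [Measure.map_apply (by fun_prop) hAm, Measure.map_apply (by fun_prop) hAm] at hA2
  convert hA2 using 2
  · ext x
    simp only [hA, mem_preimage, mem_ofPred_eq, CovOp.L_eq h, hf1]
  · ext p
    simp only [hA, mem_preimage, mem_ofPred_eq, hf2]
    have : Real.sqrt (S.sigmaSq r u) * ((n : ℝ)⁻¹ * ∑ j, (p j).1 * (p j).2) =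
      (n : ℝ)⁻¹ * ∑ j, (Real.sqrt (S.μ r) * (p j).1) *
        (Real.sqrt ⟪S.toCLM (S.C r u), S.C r u⟫ * (p j).2) := by
      rw [CovOp.sigmaSq, Real.sqrt_mul (S.μ_pos r).le]
      simp only [Finset.mul_sum]
      refine Finset.sum_congr rfl fun j _ => by ring
    rw [this]

/-- **Lemma 4.2.** For all `t ≥ 1`, with probability at least `1 - e^{-t}`,
`|⟨L_r(E)θ_r, u⟩| ≤ C σ_r(Σ;u)(√(t/n) ∨ t/n)`; moreover, if `σ_r(Σ;u) > 0`,
`sup_x |P(√n⟨L_r(E)θ_r, u⟩/σ_r(Σ;u) ≤ x) - Φ(x)| ≤ C'/√n`. -/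
theorem stmt8 :
    ∃ C : ℝ, 0 < C ∧ ∃ C' : ℝ, 0 < C' ∧
      ∀ (H : Type) (_ : NormedAddCommGroup H),
        ∀ (_ : InnerProductSpace ℝ H) (_ : CompleteSpace H)
          (_ : MeasurableSpace H) (_ : BorelSpace H)
          (S : CovOp H) (r : ℕ) (θ : H) (ν : Measure H) (n : ℕ) (u : H),
          S.SimpleVec r θ → IsGaussian ν S.toCLM → 1 ≤ n →
          (∀ t : ℝ, 1 ≤ t →
              1 - Real.exp (-t) ≤
                ((Measure.pi fun _ : Fin n => ν)
                  {x | |⟪S.L r θ (sampleCov x - S.toCLM) θ, u⟫| ≤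
                      C * Real.sqrt (S.sigmaSq r u) *
                        max (Real.sqrt (t / n)) (t / n)}).toReal) ∧
            (0 < S.sigmaSq r u →
              ∀ x : ℝ,
                |((Measure.pi fun _ : Fin n => ν)
                    {y | Real.sqrt n * ⟪S.L r θ (sampleCov y - S.toCLM) θ, u⟫ /
                        Real.sqrt (S.sigmaSq r u) ≤ x}).toReal - Phi x| ≤
                  C' / Real.sqrt n) := by
  refine ⟨4, by norm_num, 2 * Real.sqrt KK + 1, by positivity, ?_⟩
  intro H _ _ _ _ _ S r θ ν n u h hν hn
  have hn0 : (0 : ℝ) < n := by exact_mod_cast hn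
  constructor
  · intro t ht
    refine (tail n hn ht).trans ?_
    have hT := transfer h hν u n (B := {z : ℝ | |z| ≤ 4 * Real.sqrt (S.sigmaSq r u) *
      max (Real.sqrt (t / n)) (t / n)}) (measurableSet_le (by fun_prop) (by fun_prop))
    simp only [mem_ofPred_eq] at hT
    rw [hT]
    refine ENNReal.toReal_mono (measure_ne_top _ _) (measure_mono fun p hp => ?_)
    simp only [mem_ofPred_eq] at hp ⊢
    rw [abs_mul, abs_of_nonneg (Real.sqrt_nonneg _)]
    calc _ ≤ Real.sqrt (S.sigmaSq r u) * (4 * max (Real.sqrt (t / n)) (t / n)) :=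
          mul_le_mul_of_nonneg_left hp (Real.sqrt_nonneg _)
      _ = _ := by ring
  · intro hσ x
    have hs : 0 < Real.sqrt (S.sigmaSq r u) := Real.sqrt_pos.2 hσ
    have hT := transfer h hν u n (B := {z : ℝ | Real.sqrt n * z /
      Real.sqrt (S.sigmaSq r u) ≤ x}) (measurableSet_le (by fun_prop) (by fun_prop))
    simp only [mem_ofPred_eq] at hT
    rw [hT]
    have he : ∀ z : ℝ, Real.sqrt n * (Real.sqrt (S.sigmaSq r u) * z) /
        Real.sqrt (S.sigmaSq r u) = Real.sqrt n * z := by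
      intro z; field_simp
    simp only [he]
    refine (berry n hn x).trans ?_
    rw [← mul_div_assoc]
    refine div_le_div_of_nonneg_right (by linarith) (Real.sqrt_nonneg _)

end KLN
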